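/- Let n ≥ 3 and let SO(n) be the group of n×n real special orthogonal matrices. Let ι : SO(3) → SO(n) be the block-diagonal embedding g ↦ diag(g, I_{n−3}). Suppose d is a bi-invariant distance on SO(n) (i.e. d(kg, kh) = d(g,h) = d(gk, hk) for all g,h,k) such that for some constant c > 0 and all g,h ∈ SO(3), d(ι(g), ι(h)) = c · arccos((tr(g h⁻¹) − 1)/2). Then d is NOT a restricted negative definite kernel on SO(n): there exist m, elements g₁,…,g_m ∈ SO(n) and ξ₁,…,ξ_m ∈ ℂ with ∑ᵢ ξᵢ = 0 such that the real part of ∑_{i,j} d(gᵢ,gⱼ) ξᵢ conj(ξⱼ) is strictly positive. -/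

import Mathlib

/-!
A negative definite kernel has generalized roundness at least `1`: for two families of equally many
points, the total distance within the families is at most the total distance between them. In
`SO(3)`, take the Klein four-group of diagonal rotations and its translate by the cyclic permutation
of the axes, which together form part of the rotation group of the tetrahedron. Distinct points of
one family differ by a half turn, and points of different families by a third of a turn, so the
inequality would say `2 * 12 * π ≤ 2 * 16 * (2 * π / 3)`, i.e. `24 ≤ 64 / 3`.
-/

/-- `SO(n)` as found in Mathlib is only a submonoid of the matrices; we endow it with its
natural group structure (the inverse being the transpose). -/
noncomputable instance instGroupSO (n : ℕ) : Group (Matrix.specialOrthogonalGroup (Fin n) ℝ) :=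
  { (inferInstance : Monoid (Matrix.specialOrthogonalGroup (Fin n) ℝ)) with
    inv := fun g => ⟨star g.1, by
      rw [Matrix.mem_specialUnitaryGroup_iff]
      refine ⟨Unitary.star_mem g.2.1, ?_⟩
      have hdet : (g.1).det = 1 := g.2.2
      simp [Matrix.star_eq_conjTranspose, Matrix.det_conjTranspose, hdet]⟩
    inv_mul_cancel := fun g => by
      apply Subtype.ext
      exact (Unitary.mem_iff.mp g.2.1).1 }

/-- `SO(n)` is a topological group. -/
instance instTopGroupSO (n : ℕ) : IsTopologicalGroup (Matrix.specialOrthogonalGroup (Fin n) ℝ) where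
  continuous_mul := by
    apply Continuous.subtype_mk
    exact (continuous_mul.comp ((continuous_subtype_val.comp continuous_fst).prodMk
      (continuous_subtype_val.comp continuous_snd)))
  continuous_inv := by
    apply Continuous.subtype_mk
    exact continuous_star.comp continuous_subtype_val

/-- The inequality defining restricted negative definite kernels: `k` is nonpositive on complex
weights of total mass zero. Symmetry of `k` is not part of this predicate. -/
def IsRestrictedNegDef {X : Type*} (k : X → X → ℝ) : Prop :=
  ∀ (m : ℕ) (x : Fin m → X) (ξ : Fin m → ℂ), ∑ i, ξ i = 0 →
    (∑ i, ∑ j, (k (x i) (x j) : ℂ) * ξ i * (starRingEnd ℂ) (ξ j)).re ≤ 0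

namespace IsRestrictedNegDef

variable {X Y ι : Type*} {k : X → X → ℝ}

theorem comp (hk : IsRestrictedNegDef k) (f : Y → X) :
    IsRestrictedNegDef fun a b => k (f a) (f b) :=
  fun m y => hk m (f ∘ y)

theorem of_const_mul {c : ℝ} (hc : 0 < c) (hk : IsRestrictedNegDef fun a b => c * k a b) :
    IsRestrictedNegDef k := by
  intro m x ξ hξ
  have hscaled := hk m x ξ hξ
  simp only [Complex.ofReal_mul, mul_assoc, ← Finset.mul_sum, Complex.re_ofReal_mul] at hscaled
  simpa only [mul_assoc] using nonpos_of_mul_nonpos_right hscaled hc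

theorem sum_nonpos [Fintype ι] (hk : IsRestrictedNegDef k) (x : ι → X) (ξ : ι → ℝ)
    (hξ : ∑ i, ξ i = 0) : ∑ i, ∑ j, k (x i) (x j) * ξ i * ξ j ≤ 0 := by
  let e := (Fintype.equivFin ι).symm
  have hsum : ∑ i, (ξ (e i) : ℂ) = 0 := by
    rw [e.sum_comp fun i => (ξ i : ℂ), ← Complex.ofReal_sum, hξ, Complex.ofReal_zero]
  have hle := hk _ (x ∘ e) (fun i => ξ (e i)) hsum
  simp only [Complex.conj_ofReal, ← Complex.ofReal_mul, ← Complex.ofReal_sum, Complex.ofReal_re,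
    Function.comp_apply] at hle
  calc ∑ i, ∑ j, k (x i) (x j) * ξ i * ξ j
    _ = ∑ i, ∑ j, k (x (e i)) (x (e j)) * ξ (e i) * ξ (e j) := by
      rw [← e.sum_comp]
      exact Finset.sum_congr rfl fun i _ => (e.sum_comp _).symm
    _ ≤ 0 := hle

/-- The inequality saying that `k` has generalized roundness at least `1`. -/
theorem sum_add_sum_le [Fintype ι] (hk : IsRestrictedNegDef k) (x y : ι → X) :
    ∑ i, ∑ j, k (x i) (x j) + ∑ i, ∑ j, k (y i) (y j) ≤
      ∑ i, ∑ j, k (x i) (y j) + ∑ i, ∑ j, k (y i) (x j) := by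
  have h := hk.sum_nonpos (Sum.elim x y) (Sum.elim (fun _ => 1) fun _ => -1) (by simp)
  simp only [Fintype.sum_sum_type, Sum.elim_inl, Sum.elim_inr, mul_one, mul_neg,
    Finset.sum_add_distrib, Finset.sum_neg_distrib] at h
  linarith

end IsRestrictedNegDef

theorem coe_inv_eq_transpose {n : ℕ} (g : Matrix.specialOrthogonalGroup (Fin n) ℝ) :
    (g⁻¹).1 = g.1.transpose :=
  Matrix.conjTranspose_eq_transpose_of_trivial g.1

/-- The angle of the rotation `g * h⁻¹` of `ℝ³`, which is the distance of the bi-invariant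
Riemannian metric on `SO(3)`. -/
noncomputable def rotationDist (g h : Matrix.specialOrthogonalGroup (Fin 3) ℝ) : ℝ :=
  Real.arccos ((Matrix.trace ((g * h⁻¹ : Matrix.specialOrthogonalGroup (Fin 3) ℝ) :
    Matrix (Fin 3) (Fin 3) ℝ) - 1) / 2)

section RotationDist

variable {g h : Matrix.specialOrthogonalGroup (Fin 3) ℝ}

theorem rotationDist_self (g : Matrix.specialOrthogonalGroup (Fin 3) ℝ) :
    rotationDist g g = 0 := by
  rw [rotationDist, mul_inv_cancel]
  norm_num

theorem rotationDist_comm (g h : Matrix.specialOrthogonalGroup (Fin 3) ℝ) :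
    rotationDist g h = rotationDist h g := by
  have htranspose : ((h * g⁻¹ : Matrix.specialOrthogonalGroup (Fin 3) ℝ) :
      Matrix (Fin 3) (Fin 3) ℝ) = (g * h⁻¹).1.transpose := by
    rw [← coe_inv_eq_transpose, mul_inv_rev, inv_inv]
  rw [rotationDist, rotationDist, htranspose, Matrix.trace_transpose]

theorem rotationDist_mul_left (k g h : Matrix.specialOrthogonalGroup (Fin 3) ℝ) :
    rotationDist (k * g) (k * h) = rotationDist g h := by
  have hconj : k * g * (k * h)⁻¹ = k * (g * h⁻¹) * k⁻¹ := by group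
  rw [rotationDist, rotationDist, hconj, Submonoid.coe_mul, Matrix.trace_mul_comm,
    ← Submonoid.coe_mul, inv_mul_cancel_left]

theorem rotationDist_eq_pi (htrace : (g * h⁻¹).1.trace = -1) : rotationDist g h = Real.pi := by
  rw [rotationDist, htrace, ← Real.arccos_neg_one]
  norm_num

theorem rotationDist_eq_two_pi_div_three (htrace : (g * h⁻¹).1.trace = 0) :
    rotationDist g h = 2 * Real.pi / 3 := by
  have hcos : Real.cos (2 * Real.pi / 3) = (0 - 1) / 2 := by
    rw [show 2 * Real.pi / 3 = Real.pi - Real.pi / 3 by ring, Real.cos_pi_sub,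
      Real.cos_pi_div_three]
    norm_num
  rw [rotationDist, htrace, ← hcos, Real.arccos_cos] <;> linarith [Real.pi_pos]

end RotationDist

/-- The group of sign vectors with an even number of entries `-1`, i.e. those whose diagonal
matrix is a rotation; for `n = 3` it is the Klein four-group. -/
def evenSigns (n : ℕ) : Subgroup (Fin n → ℤˣ) where
  carrier := {s | ∏ i, s i = 1}
  one_mem' := by simp
  mul_mem' {s t} hs ht := by simp_all [Finset.prod_mul_distrib]
  inv_mem' {s} hs := by simp_all

instance (n : ℕ) : DecidablePred (· ∈ evenSigns n) :=
  fun s => inferInstanceAs (Decidable (∏ i, s i = 1))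

section Rotations

variable {n : ℕ}

/-- The diagonal matrices with an even number of entries `-1` and all others `1`, as rotations. -/
noncomputable def signRotation : evenSigns n →* Matrix.specialOrthogonalGroup (Fin n) ℝ :=
  MonoidHom.mk' (fun s => ⟨Matrix.diagonal fun i => ((s.1 i : ℤ) : ℝ), by
    rw [Matrix.mem_specialOrthogonalGroup_iff, Matrix.mem_orthogonalGroup_iff]
    constructor
    · simp [← Int.cast_mul]
    · simpa using congrArg (fun u : ℤˣ => ((u : ℤ) : ℝ)) s.2⟩)
    fun s t => Subtype.ext <| by simp

/-- The permutation matrices of even permutations, as rotations. Since `Equiv.Perm.permMatrix`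
reverses products, `σ` is sent to the matrix of `σ⁻¹`. -/
noncomputable def permRotation :
    alternatingGroup (Fin n) →* Matrix.specialOrthogonalGroup (Fin n) ℝ :=
  (Matrix.permMatrixHom.comp (alternatingGroup (Fin n)).subtype).codRestrict
    (Matrix.specialOrthogonalGroup (Fin n) ℝ) fun σ => by
    rw [Matrix.mem_specialOrthogonalGroup_iff, Matrix.mem_orthogonalGroup_iff]
    constructor
    · simp [← Matrix.permMatrix_mul]
    · simp [Equiv.Perm.mem_alternatingGroup.mp σ.2]

theorem trace_signRotation (s : evenSigns n) :
    (signRotation s).1.trace = ((∑ i, (s.1 i : ℤ) : ℤ) : ℝ) := by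
  simp [signRotation]

theorem trace_signRotation_mul_permRotation (s : evenSigns n) (σ : alternatingGroup (Fin n))
    (hσ : ∀ i, σ.1 i ≠ i) : (signRotation s * permRotation σ).1.trace = 0 := by
  have hdiag (i) : (permRotation σ).1 i i = 0 := by
    simp [permRotation, PEquiv.toMatrix_apply, Equiv.symm_apply_eq, (hσ i).symm]
  refine Finset.sum_eq_zero fun i _ => ?_
  simp [signRotation, hdiag]

end Rotations

theorem card_evenSigns_three : Fintype.card (evenSigns 3) = 4 := by decide

theorem sum_evenSigns_three_of_ne_one :
    ∀ s : evenSigns 3, s ≠ 1 → ∑ i, (s.1 i : ℤ) = -1 := by decide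

/-- The cyclic permutation of the three coordinate axes. -/
noncomputable def axisCycle : Matrix.specialOrthogonalGroup (Fin 3) ℝ :=
  permRotation ⟨finRotate 3, by simp [Equiv.Perm.mem_alternatingGroup, sign_finRotate]⟩

theorem rotationDist_signRotation (s t : evenSigns 3) :
    rotationDist (signRotation s) (signRotation t) = if s = t then 0 else Real.pi := by
  split_ifs with hst
  · rw [hst, rotationDist_self]
  · apply rotationDist_eq_pi
    rw [← div_eq_mul_inv, ← map_div, trace_signRotation,
      sum_evenSigns_three_of_ne_one _ (div_ne_one.mpr hst), Int.cast_neg, Int.cast_one]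

theorem rotationDist_axisCycle_mul_signRotation (s t : evenSigns 3) :
    rotationDist (signRotation s) (axisCycle * signRotation t) = 2 * Real.pi / 3 := by
  apply rotationDist_eq_two_pi_div_three
  rw [mul_inv_rev, ← mul_assoc, ← div_eq_mul_inv (signRotation s), ← map_div, axisCycle, ← map_inv]
  exact trace_signRotation_mul_permRotation _ _ (by decide)

theorem not_isRestrictedNegDef_rotationDist : ¬ IsRestrictedNegDef rotationDist := by
  intro hneg
  have h := hneg.sum_add_sum_le signRotation fun s => axisCycle * signRotation s
  have hrow (s : evenSigns 3) : ∑ t, (if s = t then 0 else Real.pi) = 3 * Real.pi := by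
    simp [Finset.sum_ite, Finset.filter_ne, card_evenSigns_three]
  simp only [rotationDist_mul_left, rotationDist_comm (axisCycle * _) (signRotation _),
    rotationDist_signRotation, rotationDist_axisCycle_mul_signRotation, hrow,
    Finset.sum_const, Finset.card_univ, card_evenSigns_three, nsmul_eq_mul] at h
  push_cast at h
  linarith [Real.pi_pos]

theorem SOn_biinvariant_dist_not_restricted_negdef_general {X : Type*} (k : X → X → ℝ)
    (ι : Matrix.specialOrthogonalGroup (Fin 3) ℝ → X) (c : ℝ) (hc : 0 < c)
    (hres : ∀ g h, k (ι g) (ι h) = c * rotationDist g h) : ¬ IsRestrictedNegDef k := fun hk =>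
  not_isRestrictedNegDef_rotationDist <| .of_const_mul hc <| by simpa only [hres] using hk.comp ι

open Real Finset in
/-- Any bi-invariant distance on `SO(n)`, `n ≥ 3`, restricting along the block-diagonal
embedding `ι : SO(3) → SO(n)` to a positive multiple of the rotation-angle distance of
`SO(3)`, is NOT a restricted negative definite kernel. -/
theorem SOn_biinvariant_dist_not_restricted_negdef
    (n : ℕ) (hn : 3 ≤ n)
    (d : Matrix.specialOrthogonalGroup (Fin n) ℝ →
      Matrix.specialOrthogonalGroup (Fin n) ℝ → ℝ)
    -- `d` is a distance
    (hsymm : ∀ g h, d g h = d h g)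
    (hzero : ∀ g h, d g h = 0 ↔ g = h)
    (htriangle : ∀ g h k, d g k ≤ d g h + d h k)
    -- `d` is bi-invariant
    (hleft : ∀ k g h, d (k * g) (k * h) = d g h)
    (hright : ∀ k g h, d (g * k) (h * k) = d g h)
    -- `ι` is the block-diagonal embedding `g ↦ diag(g, I_{n-3})`
    (ι : Matrix.specialOrthogonalGroup (Fin 3) ℝ → Matrix.specialOrthogonalGroup (Fin n) ℝ)
    (hι : ∀ g (i j : Fin n), (ι g : Matrix (Fin n) (Fin n) ℝ) i j =
      if hi : (i : ℕ) < 3 then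
        (if hj : (j : ℕ) < 3 then (g : Matrix (Fin 3) (Fin 3) ℝ) ⟨i, hi⟩ ⟨j, hj⟩ else 0)
      else (if (i : ℕ) = (j : ℕ) then 1 else 0))
    -- the restriction of `d` along `ι` is `c` times the rotation-angle distance on `SO(3)`
    (c : ℝ) (hc : 0 < c)
    (hres : ∀ g h : Matrix.specialOrthogonalGroup (Fin 3) ℝ,
      d (ι g) (ι h) = c * arccos ((Matrix.trace ((g * h⁻¹ :
        Matrix.specialOrthogonalGroup (Fin 3) ℝ) : Matrix (Fin 3) (Fin 3) ℝ) - 1) / 2)) :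
    ∃ (m : ℕ) (g : Fin m → Matrix.specialOrthogonalGroup (Fin n) ℝ) (ξ : Fin m → ℂ),
      (∑ i, ξ i) = 0 ∧
      0 < (∑ i, ∑ j, ((d (g i) (g j) : ℝ) : ℂ) * ξ i * (starRingEnd ℂ) (ξ j)).re := by
  simpa only [IsRestrictedNegDef, not_forall, not_le, exists_prop] using
    SOn_biinvariant_dist_not_restricted_negdef_general d ι c hc hres
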